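/- arXiv:1608.03499 — 3 statements merged into one kernel-verified Lean document; each statement's English description precedes it below -/
import Mathlib

section
/- The principal minor lattice L'_n is contained in the Veronese lattice L_n, and the quotient group L_n/L'_n is isomorphic to (ℤ/2ℤ)^{c_{n−1}}. -/
open scoped BigOperators

namespace Veronese

open MvPolynomial

/-- `c m = C(m,2)`. -/
def c (m : ℕ) : ℕ := m.choose 2

variable (n : ℕ)

/-- multiplicity (as ℤ) of the index `i` in the unordered pair `s`. -/
def wt (s : Sym2 (Fin n)) : Fin n → ℤ :=
  Sym2.lift ⟨fun a b i => (if i = a then 1 else 0) + (if i = b then 1 else 0),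
    fun a b => funext fun i => add_comm _ _⟩ s

/-- The Veronese grading map `V_n : ℤ^P → ℤ^n`, sending `e_{ij} ↦ e_i + e_j`. -/
def Vmap : (Sym2 (Fin n) → ℤ) →ₗ[ℤ] (Fin n → ℤ) where
  toFun u := fun i => ∑ s : Sym2 (Fin n), u s * wt n s i
  map_add' u v := funext fun i => by
    simp [add_mul, Finset.sum_add_distrib]
  map_smul' m u := funext fun i => by
    simp [Finset.mul_sum, smul_eq_mul, mul_assoc]

/-- The Veronese lattice `L_n = ker V_n`. -/
def Llat : Submodule ℤ (Sym2 (Fin n) → ℤ) := LinearMap.ker (Vmap n)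

/-- standard basis vector `e_{ij}` of `ℤ^P`. -/
def e (i j : Fin n) : Sym2 (Fin n) → ℤ := Pi.single s(i, j) 1

lemma e_comm (i j : Fin n) : e n i j = e n j i := by
  unfold e; rw [Sym2.eq_swap]

/-- `[ij|ij] = e_{ii} + e_{jj} - 2 e_{ij}`. -/
def minorVec (i j : Fin n) : Sym2 (Fin n) → ℤ := e n i i + e n j j - 2 • e n i j

/-- The principal minor lattice `L'_n`. -/
def L'lat : Submodule ℤ (Sym2 (Fin n) → ℤ) :=
  Submodule.span ℤ {v | ∃ i j : Fin n, i < j ∧ v = minorVec n i j}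

/-- the last index `n` (zero-based: `n-1`) of `Fin n`. -/
def lastIdx (hn : 0 < n) : Fin n := ⟨n - 1, Nat.sub_lt hn one_pos⟩

/-- embedding `[n-1] → [n]`. -/
def ι : Fin (n - 1) → Fin n := Fin.castLE (Nat.sub_le n 1)

/-- `[in|jn] = e_{ij} + e_{nn} - e_{in} - e_{jn}` for `i,j ∈ [n-1]`. -/
def Bvec (hn : 0 < n) : Sym2 (Fin (n - 1)) → (Sym2 (Fin n) → ℤ) :=
  Sym2.lift ⟨fun i j =>
      e n (ι n i) (ι n j) + e n (lastIdx n hn) (lastIdx n hn)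
        - e n (ι n i) (lastIdx n hn) - e n (ι n j) (lastIdx n hn),
    fun i j => by dsimp only; rw [e_comm n (ι n i) (ι n j)]; ring⟩

/-- The family `B'`: `[in|in]` on the diagonal, `2[in|jn]` off it. -/
noncomputable def B'vec (hn : 0 < n) (s : Sym2 (Fin (n - 1))) : Sym2 (Fin n) → ℤ :=
  if s.IsDiag then Bvec n hn s else 2 • Bvec n hn s

/-- multiplicity (as ℕ) of the index `i` in the unordered pair `s`. -/
def wtN (s : Sym2 (Fin n)) : Fin n → ℕ :=
  Sym2.lift ⟨fun a b i => (if i = a then 1 else 0) + (if i = b then 1 else 0),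
    fun a b => funext fun i => add_comm _ _⟩ s

/-- The Veronese degree of an exponent vector `u ∈ ℕ^P`. -/
def VN (u : Sym2 (Fin n) →₀ ℕ) : Fin n → ℕ := fun i => ∑ s : Sym2 (Fin n), u s * wtN n s i

/-- The fiber `V_n^{-1}[b] = {u ∈ ℕ^P : V_n u = b}`. -/
def fiber (b : Fin n → ℕ) : Set (Sym2 (Fin n) →₀ ℕ) := {u | VN n u = b}

/-- natural inclusion `ℕ^P → ℤ^P`. -/
def toZ (u : Sym2 (Fin n) →₀ ℕ) : Sym2 (Fin n) → ℤ := fun s => (u s : ℤ)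

lemma fiber_finite (b : Fin n → ℕ) : (fiber n b).Finite := by
  classical
  have hsub : fiber n b ⊆
      ↑(Finset.Iic ((Finsupp.equivFunOnFinite.symm fun _ => ∑ i, b i) : Sym2 (Fin n) →₀ ℕ)) := by
    intro u hu
    simp only [Finset.coe_Iic, Set.mem_Iic, Finsupp.le_def]
    intro s
    induction s using Sym2.ind with
    | _ i j =>
      have h1 : u s(i, j) * wtN n s(i, j) i ≤ VN n u i :=
        Finset.single_le_sum (f := fun s => u s * wtN n s i)
          (fun s _ => Nat.zero_le _) (Finset.mem_univ s(i, j))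
      have h2 : 1 ≤ wtN n s(i, j) i := by
        simp only [wtN, Sym2.lift_mk, if_pos rfl]
        exact Nat.le_add_right 1 _
      have h3 : u s(i, j) ≤ b i := by
        have hb : VN n u i = b i := congrFun hu i
        calc u s(i, j) ≤ u s(i, j) * wtN n s(i, j) i := Nat.le_mul_of_pos_right _ h2
          _ ≤ VN n u i := h1
          _ = b i := hb
      calc u s(i, j) ≤ b i := h3
        _ ≤ ∑ i, b i := Finset.single_le_sum (fun _ _ => Nat.zero_le _) (Finset.mem_univ _)
        _ = (Finsupp.equivFunOnFinite.symm fun _ => ∑ i, b i) s(i, j) := by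
            simp
  exact Set.Finite.subset (Finset.finite_toSet _) hsub

variable (k : Type*) [Field k]

/-- the polynomial ring `k[x_{ij}]`. -/
abbrev R := MvPolynomial (Sym2 (Fin n)) k

/-- The principal minor ideal `J_n`. -/
noncomputable def Jideal : Ideal (R n k) :=
  Ideal.span {f | ∃ i j : Fin n, i < j ∧ f = X s(i, i) * X s(j, j) - X s(i, j) ^ 2}

/-- The map `x_{ij} ↦ t_i t_j`. -/
noncomputable def veroHom : R n k →ₐ[k] MvPolynomial (Fin n) k :=
  aeval fun s => Sym2.lift ⟨fun a b => X a * X b, fun a b => mul_comm _ _⟩ s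

/-- The second Veronese ideal `I_n`. -/
noncomputable def Iideal : Ideal (R n k) := RingHom.ker (veroHom n k)

/-- A ℤ₂-twisting: an automorphism sending each variable to ± itself. -/
def IsTwisting (φ : R n k ≃ₐ[k] R n k) : Prop :=
  ∀ s : Sym2 (Fin n), φ (X s) = X s ∨ φ (X s) = - X s

/-- `f` is V_n-homogeneous of degree `b`. -/
def VHomog (f : R n k) (b : Fin n → ℕ) : Prop := ∀ u ∈ f.support, VN n u = b

/-- The fiber over `b` as a finite set. -/
noncomputable def fiberFinset (b : Fin n → ℕ) : Finset (Sym2 (Fin n) →₀ ℕ) :=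
  (fiber_finite n b).toFinset

/-- generating function of the canonical (0/1 off-diagonal) representatives of
the fiber over `b`. -/
noncomputable def pplusAt (b : Fin n → ℕ) : R n k :=
  ∑ u ∈ (fiberFinset n b).filter (fun u => ∀ s : Sym2 (Fin n), ¬s.IsDiag → u s ≤ 1),
    monomial u (1 : k)

/-- `p⁺_{n,j}` (for `n` odd): fiber over `(n-2,…,n-2) + e_j`. -/
noncomputable def pplusOdd (j : Fin n) : R n k :=
  pplusAt n k fun i => (n - 2) + if i = j then 1 else 0

/-- `p⁺_n` (for `n` even): fiber over `(n-2,…,n-2)`. -/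
noncomputable def pplusEven : R n k :=
  pplusAt n k fun _ => n - 2

/-- `p_n = ∏_{i<j∈[n-1]} (x_{ij} x_{nn} + x_{in} x_{jn})`. -/
noncomputable def pn (hn : 0 < n) : R n k :=
  ∏ p ∈ Finset.univ.filter (fun p : Fin (n - 1) × Fin (n - 1) => p.1 < p.2),
    (X s(ι n p.1, ι n p.2) * X s(lastIdx n hn, lastIdx n hn)
      + X s(ι n p.1, lastIdx n hn) * X s(ι n p.2, lastIdx n hn))


/-!
A vector `u` of the Veronese lattice is an integer labelling of the edges and loops of the complete
graph on `n` vertices with `2 u_{ii} + ∑_{j ≠ i} u_{ij} = 0` at every vertex `i`. Its off-diagonal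
labels therefore determine it. Adding multiples of the `[ij|ij]` changes each off-diagonal label
independently by any even number, so the principal minor lattice consists of exactly those `u`
whose off-diagonal labels are all even, and `L_n / L'_n` is the mod 2 cycle space of the complete
graph. Fix a vertex `m`. A cycle is determined by its edges away from `m`, and these can be
prescribed freely: among them the triangle `ijm`, the off-diagonal part of `[im|jm]` mod 2, contains
only the edge `ij`. This leaves `C(n - 1, 2)` free bits.
-/

section

variable {n}

lemma e_apply (i j : Fin n) (s : Sym2 (Fin n)) : e n i j s = if s = s(i, j) then 1 else 0 :=
  Pi.single_apply s(i, j) 1 s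

lemma wt_eq_e_add_sum_e (s : Sym2 (Fin n)) (i : Fin n) : wt n s i = e n i i s + ∑ j, e n i j s := by
  induction s using Sym2.ind with
  | _ a b =>
    obtain rfl | hia := eq_or_ne i a
    · simp only [wt, Sym2.lift_mk, e_apply, Sym2.congr_right, eq_comm (a := b),
        Finset.sum_ite_eq', Finset.mem_univ, if_true, add_comm]
    · obtain rfl | hib := eq_or_ne i b
      · rw [Sym2.eq_swap]
        simp [wt, e_apply, hia, hia.symm]
      · simp [wt, e_apply, hia, hib, hia.symm, hib.symm]

lemma Vmap_apply (u : Sym2 (Fin n) → ℤ) (i : Fin n) :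
    Vmap n u i = u s(i, i) + ∑ j, u s(i, j) := by
  have hsum (j : Fin n) : ∑ s, u s * e n i j s = u s(i, j) := by simp [e_apply]
  calc Vmap n u i = ∑ s, u s * wt n s i := rfl
    _ = ∑ s, u s * e n i i s + ∑ j, ∑ s, u s * e n i j s := by
      simp only [wt_eq_e_add_sum_e, mul_add, Finset.mul_sum, Finset.sum_add_distrib]
      rw [Finset.sum_comm]
    _ = u s(i, i) + ∑ j, u s(i, j) := by simp only [hsum]

lemma Vmap_e (i j : Fin n) : Vmap n (e n i j) = Pi.single i 1 + Pi.single j 1 := by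
  ext k
  simp [Vmap, e, wt, Pi.single_apply]

lemma mem_Llat_iff {u : Sym2 (Fin n) → ℤ} :
    u ∈ Llat n ↔ ∀ i, u s(i, i) + ∑ j, u s(i, j) = 0 := by
  simp only [Llat, LinearMap.mem_ker, funext_iff, Vmap_apply, Pi.zero_apply]

lemma minorVec_mem_Llat (i j : Fin n) : minorVec n i j ∈ Llat n := by
  simp only [Llat, LinearMap.mem_ker, minorVec, map_sub, map_add, map_nsmul, Vmap_e]
  abel

lemma L'lat_le_Llat : L'lat n ≤ Llat n := by
  refine Submodule.span_le.2 ?_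
  rintro _ ⟨i, j, -, rfl⟩
  exact minorVec_mem_Llat i j

lemma eq_zero_of_mem_Llat_of_offDiag_eq_zero {u : Sym2 (Fin n) → ℤ} (hu : u ∈ Llat n)
    (hoff : ∀ i j, i ≠ j → u s(i, j) = 0) : u = 0 := by
  ext s
  induction s using Sym2.ind with
  | _ i j =>
    obtain rfl | hij := eq_or_ne i j
    · have hsum : ∑ j, u s(i, j) = u s(i, i) :=
        Fintype.sum_eq_single i fun j hji => hoff i j hji.symm
      have hdeg := mem_Llat_iff.1 hu i
      simp only [Pi.zero_apply]
      omega
    · exact hoff i j hij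

lemma minorVec_apply_of_ne (a b : Fin n) {i j : Fin n} (hij : i ≠ j) :
    minorVec n a b s(i, j) = -2 * e n a b s(i, j) := by
  have hdiag (c : Fin n) : e n c c s(i, j) = 0 := by
    rw [e_apply, if_neg]
    grind
  simp [minorVec, hdiag]

lemma even_of_mem_L'lat {u : Sym2 (Fin n) → ℤ} (hu : u ∈ L'lat n) {i j : Fin n} (hij : i ≠ j) :
    Even (u s(i, j)) := by
  rw [L'lat] at hu
  induction hu using Submodule.span_induction with
  | mem _ hv =>
    obtain ⟨a, b, -, rfl⟩ := hv
    rw [minorVec_apply_of_ne a b hij]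
    exact (even_neg.2 even_two).mul_right _
  | zero => exact Even.zero
  | add _ _ _ _ hv hw => exact hv.add hw
  | smul z _ _ hv => exact hv.mul_left z

lemma sum_smul_minorVec_apply_of_lt (f : Fin n → Fin n → ℤ) {i j : Fin n} (hij : i < j) :
    (∑ p : Fin n × Fin n with p.1 < p.2, f p.1 p.2 • minorVec n p.1 p.2) s(i, j) =
      -2 * f i j := by
  rw [Finset.sum_apply, Finset.sum_eq_single (i, j)]
  · simp [minorVec_apply_of_ne i j hij.ne, e_apply, mul_comm]
  · rintro ⟨a, b⟩ hab hne
    have hpair : s(i, j) ≠ s(a, b) := by grind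
    simp [minorVec_apply_of_ne a b hij.ne, e_apply, hpair]
  · simp [hij]

lemma mem_L'lat_of_even {u : Sym2 (Fin n) → ℤ} (hu : u ∈ Llat n)
    (heven : ∀ i j, i ≠ j → Even (u s(i, j))) : u ∈ L'lat n := by
  set v := ∑ p : Fin n × Fin n with p.1 < p.2, (u s(p.1, p.2) / 2) • minorVec n p.1 p.2
  have hvL' : v ∈ L'lat n := Submodule.sum_mem _ fun p hp =>
    Submodule.smul_mem _ _ (Submodule.subset_span ⟨p.1, p.2, by simpa using hp, rfl⟩)
  have hlt (i j : Fin n) (hij : i < j) : (u + v) s(i, j) = 0 := by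
    have hvij : v s(i, j) = -2 * (u s(i, j) / 2) :=
      sum_smul_minorVec_apply_of_lt (fun a b => u s(a, b) / 2) hij
    have hhalf := Int.two_mul_ediv_two_of_even (heven i j hij.ne)
    rw [Pi.add_apply, hvij]
    linarith
  have hzero : u + v = 0 := by
    refine eq_zero_of_mem_Llat_of_offDiag_eq_zero (add_mem hu (L'lat_le_Llat hvL')) ?_
    intro i j hij
    obtain h | h := hij.lt_or_gt
    · exact hlt i j h
    · rw [Sym2.eq_swap]
      exact hlt j i h
  rw [eq_neg_of_add_eq_zero_left hzero]
  exact neg_mem hvL'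

lemma mem_L'lat_iff_even {u : Sym2 (Fin n) → ℤ} (hu : u ∈ Llat n) :
    u ∈ L'lat n ↔ ∀ i j, i ≠ j → Even (u s(i, j)) :=
  ⟨fun h _ _ => even_of_mem_L'lat h, mem_L'lat_of_even hu⟩

lemma even_of_even_away {u : Sym2 (Fin n) → ℤ} (hu : u ∈ Llat n) (m : Fin n)
    (haway : ∀ i ≠ m, ∀ j ≠ m, i ≠ j → Even (u s(i, j))) {i j : Fin n} (hij : i ≠ j) :
    Even (u s(i, j)) := by
  have hstar (i : Fin n) (him : i ≠ m) : Even (u s(i, m)) := by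
    have hrest : Even (∑ j ∈ (Finset.univ.erase i).erase m, u s(i, j)) :=
      Finset.even_sum _ fun j hj => by
        simp only [Finset.mem_erase, Finset.mem_univ, and_true] at hj
        exact haway i him j hj.1 hj.2.symm
    have hdeg := mem_Llat_iff.1 hu i
    rw [← Finset.add_sum_erase _ _ (Finset.mem_univ i),
      ← Finset.add_sum_erase _ _ (Finset.mem_erase.2 ⟨him.symm, Finset.mem_univ m⟩)] at hdeg
    have him_eq : u s(i, m) =
        -(2 * u s(i, i) + ∑ j ∈ (Finset.univ.erase i).erase m, u s(i, j)) := by linarith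
    rw [him_eq]
    exact ((even_two_mul _).add hrest).neg
  obtain rfl | him := eq_or_ne i m
  · rw [Sym2.eq_swap]
    exact hstar j hij.symm
  · obtain rfl | hjm := eq_or_ne j m
    · exact hstar i him
    · exact haway i him j hjm hij

/-- The edges of the complete graph on `Fin n` that avoid the vertex `m`. -/
abbrev EdgeAway (m : Fin n) : Type := {s : Sym2 {i : Fin n // i ≠ m} // ¬ s.IsDiag}

lemma card_edgeAway (m : Fin n) : Fintype.card (EdgeAway m) = (n - 1).choose 2 := by
  rw [Sym2.card_subtype_not_diag, Fintype.card_subtype_compl, Fintype.card_subtype_eq,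
    Fintype.card_fin]

/-- Reduction mod 2 of the coordinates of a Veronese lattice vector at the edges avoiding `m`. -/
def parityAway (m : Fin n) : Llat n →ₗ[ℤ] (EdgeAway m → ZMod 2) where
  toFun u s := (u.1 (s.1.map (↑)) : ℤ)
  map_add' u v := by ext; simp
  map_smul' z u := by ext; simp

lemma parityAway_eq_zero_iff {m : Fin n} {u : Llat n} :
    parityAway m u = 0 ↔ ∀ i ≠ m, ∀ j ≠ m, i ≠ j → Even (u.1 s(i, j)) := by
  simp [parityAway, funext_iff, Sym2.forall, ZMod.intCast_eq_zero_iff_even]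

lemma ker_parityAway (m : Fin n) :
    LinearMap.ker (parityAway m) = (L'lat n).comap (Llat n).subtype := by
  ext u
  rw [LinearMap.mem_ker, parityAway_eq_zero_iff, Submodule.mem_comap, Submodule.subtype_apply,
    mem_L'lat_iff_even u.2]
  exact ⟨fun h _ _ => even_of_even_away u.2 m h, fun h i _ j _ => h i j⟩

/-- The minor `[im|jm] = e_{ij} + e_{mm} - e_{im} - e_{jm}` for an arbitrary pivot `m`;
`Bvec` is the family with `m` the last index. -/
def pivotMinor (m i j : Fin n) : Sym2 (Fin n) → ℤ := e n i j + e n m m - e n i m - e n j m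

lemma pivotMinor_mem_Llat (m i j : Fin n) : pivotMinor m i j ∈ Llat n := by
  simp only [Llat, LinearMap.mem_ker, pivotMinor, map_sub, map_add, Vmap_e]
  abel

lemma pivotMinor_apply_away {m : Fin n} (i j : Fin n) {s : Sym2 (Fin n)} (hs : m ∉ s) :
    pivotMinor m i j s = e n i j s := by
  have hzero (a : Fin n) : e n a m s = 0 := by
    rw [e_apply, if_neg]
    rintro rfl
    exact hs (Sym2.mem_mk_right a m)
  simp [pivotMinor, hzero]

lemma parityAway_pivotMinor {m : Fin n} (i j : {i : Fin n // i ≠ m}) (hij : ¬ s(i, j).IsDiag) :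
    parityAway m ⟨pivotMinor m i j, pivotMinor_mem_Llat m i j⟩ = Pi.single ⟨s(i, j), hij⟩ 1 := by
  ext ⟨t, ht⟩
  have hmt : m ∉ t.map (↑) := by simp [Sym2.mem_map]
  have hiff : t.map (↑) = s((i : Fin n), (j : Fin n)) ↔ t = s(i, j) :=
    (Sym2.map.injective Subtype.val_injective).eq_iff (b := s(i, j))
  simp [parityAway, pivotMinor_apply_away _ _ hmt, e_apply, Pi.single_apply, hiff]

lemma parityAway_surjective (m : Fin n) : Function.Surjective (parityAway m) := by
  intro g
  have hsingle (s : EdgeAway m) (x : ZMod 2) : Pi.single s x ∈ LinearMap.range (parityAway m) := by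
    obtain ⟨s, hs⟩ := s
    induction s using Sym2.ind with
    | _ i j =>
      have hx : Pi.single ⟨s(i, j), hs⟩ x =
          (x.val : ℤ) • (Pi.single ⟨s(i, j), hs⟩ 1 : EdgeAway m → ZMod 2) := by
        rw [← Pi.single_smul]
        simp
      rw [hx, ← parityAway_pivotMinor]
      exact Submodule.smul_mem _ _ (LinearMap.mem_range_self _ _)
  rw [← LinearMap.mem_range, ← Finset.univ_sum_single g]
  exact Submodule.sum_mem _ fun s _ => hsingle s (g s)

end

/-- `L'_n ⊆ L_n` and `L_n / L'_n ≅ (ℤ/2ℤ)^{c_{n-1}}`. -/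
theorem lattice_quotient_iso (n : ℕ) (hn : 2 ≤ n) :
    L'lat n ≤ Llat n ∧
    Nonempty ((↥(Llat n) ⧸ (L'lat n).comap (Llat n).subtype) ≃+
      (Fin (c (n - 1)) → ZMod 2)) := by
  refine ⟨L'lat_le_Llat, ?_⟩
  let m : Fin n := lastIdx n (by omega)
  let edges : Fin (c (n - 1)) ≃ EdgeAway m := (Fintype.equivFinOfCardEq (card_edgeAway m)).symm
  exact ⟨(Submodule.quotEquivOfEq _ _ (ker_parityAway m).symm
    ≪≫ₗ (parityAway m).quotKerEquivOfSurjective (parityAway_surjective m)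
    ≪≫ₗ LinearEquiv.funCongrLeft ℤ (ZMod 2) edges).toAddEquiv⟩

end Veronese
end

section
/- The principal minor ideal J_n is the lattice ideal of L'_n: J_n = ⟨ x^{u⁺} − x^{u⁻} : u ∈ L'_n ⟩, where u = u⁺ − u⁻ is the decomposition of u ∈ ℤ^P into its componentwise positive and negative parts u⁺, u⁻ ∈ ℕ^P. In particular, for every u ∈ L'_n the binomial x^{u⁺} − x^{u⁻} lies in J_n, and these binomials generate J_n. -/
open scoped BigOperators

namespace Veronese

open MvPolynomial

variable (n : ℕ)

variable (k : Type*) [Field k]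

/-- the positive part of `u ∈ ℤ^P`, as an exponent vector in `ℕ^P`. -/
noncomputable def posPart (u : Sym2 (Fin n) → ℤ) : Sym2 (Fin n) →₀ ℕ :=
  Finsupp.equivFunOnFinite.symm fun s => (u s).toNat

/-!
Modulo the principal minors, `x_{ij}²` may be replaced by `x_{ii} x_{jj}`, so every monomial is
congruent to a reduced one, whose off-diagonal exponents are at most `1`. Two reduced monomials
whose exponents differ by an element of the lattice coincide: lattice vectors have even entries off
the diagonal, so the two agree there, and the remaining difference is diagonal and is killed by the
Veronese grading `e_{ij} ↦ e_i + e_j`, which is injective on diagonal vectors. Hence the congruence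
on exponents generated by the minors is the congruence modulo the lattice, and the two ideals agree.
-/

section LatticeIdeal

variable {τ : Type*}

/-- The inclusion `ℕ^τ → ℤ^τ` of exponent vectors. -/
noncomputable def toInt : (τ →₀ ℕ) →+ (τ →₀ ℤ) :=
  Finsupp.mapRange.addMonoidHom (Nat.castAddMonoidHom ℤ)

@[simp]
lemma toInt_apply (u : τ →₀ ℕ) (t : τ) : toInt u t = u t := rfl

@[simp]
lemma toInt_single (t : τ) (m : ℕ) :
    toInt (Finsupp.single t m) = Finsupp.single t (m : ℤ) :=
  Finsupp.mapRange_single (hf := Nat.cast_zero)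

/-- The positive part `w⁺ ∈ ℕ^τ` of `w ∈ ℤ^τ`; the negative part `w⁻` is `toNat (-w)`. -/
noncomputable def toNat (w : τ →₀ ℤ) : τ →₀ ℕ := w.mapRange Int.toNat Int.toNat_zero

@[simp]
lemma toNat_apply (w : τ →₀ ℤ) (t : τ) : toNat w t = (w t).toNat := rfl

lemma toInt_toNat_sub_toInt_toNat_neg (w : τ →₀ ℤ) : toInt (toNat w) - toInt (toNat (-w)) = w := by
  ext t
  simp

lemma toNat_toInt_sub_add_inf (u v : τ →₀ ℕ) : toNat (toInt u - toInt v) + u ⊓ v = u := by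
  ext t
  simp only [Finsupp.add_apply, toNat_apply, Finsupp.sub_apply, toInt_apply, Finsupp.inf_apply]
  omega

/-- The congruence on `ℕ^τ` of congruence modulo a lattice `L ⊆ ℤ^τ`. -/
noncomputable def latticeCon (L : Submodule ℤ (τ →₀ ℤ)) : AddCon (τ →₀ ℕ) :=
  AddCon.ker (L.mkQ.toAddMonoidHom.comp toInt)

lemma latticeCon_iff {L : Submodule ℤ (τ →₀ ℤ)} {u v : τ →₀ ℕ} :
    latticeCon L u v ↔ toInt u - toInt v ∈ L :=
  Submodule.Quotient.eq L

variable {A : Type*} [CommRing A]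

/-- The congruence on exponents identifying `u` and `v` when `x^u - x^v` lies in the ideal `I`. -/
noncomputable def monomialCon (I : Ideal (MvPolynomial τ A)) : AddCon (τ →₀ ℕ) where
  r u v := Ideal.Quotient.mk I (monomial u 1) = Ideal.Quotient.mk I (monomial v 1)
  iseqv := ⟨fun _ ↦ rfl, Eq.symm, Eq.trans⟩
  add' {u v u' v'} h h' := by
    rw [← one_mul (1 : A), ← monomial_mul, ← monomial_mul, map_mul, map_mul, h, h']

lemma monomialCon_iff {I : Ideal (MvPolynomial τ A)} {u v : τ →₀ ℕ} :
    monomialCon I u v ↔ monomial u (1 : A) - monomial v 1 ∈ I :=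
  Ideal.Quotient.eq

variable (A)

/-- The ideal generated by the binomials `x^u - x^v` with `r u v`. -/
noncomputable def binomialIdeal (r : (τ →₀ ℕ) → (τ →₀ ℕ) → Prop) : Ideal (MvPolynomial τ A) :=
  Ideal.span {f | ∃ u v, r u v ∧ f = monomial u 1 - monomial v 1}

/-- The lattice ideal `⟨x^{w⁺} - x^{w⁻} : w ∈ L⟩` of a lattice `L ⊆ ℤ^τ`. -/
noncomputable def latticeIdeal (L : Submodule ℤ (τ →₀ ℤ)) : Ideal (MvPolynomial τ A) :=
  Ideal.span {f | ∃ w ∈ L, f = monomial (toNat w) 1 - monomial (toNat (-w)) 1}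

lemma addConGen_le_monomialCon_binomialIdeal (r : (τ →₀ ℕ) → (τ →₀ ℕ) → Prop) :
    addConGen r ≤ monomialCon (binomialIdeal A r) :=
  AddCon.addConGen_le.2 fun u v h ↦ monomialCon_iff.2 <| Ideal.subset_span ⟨u, v, h, rfl⟩

lemma latticeCon_le_monomialCon_latticeIdeal (L : Submodule ℤ (τ →₀ ℤ)) :
    latticeCon L ≤ monomialCon (latticeIdeal A L) := by
  intro u v huv
  -- `x^u` and `x^v` are the multiples of `x^{w⁺}` and `x^{w⁻}` by the same monomial `x^{u ⊓ v}`.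
  have hw : monomialCon (latticeIdeal A L)
      (toNat (toInt u - toInt v)) (toNat (-(toInt u - toInt v))) :=
    monomialCon_iff.2 <| Ideal.subset_span ⟨_, latticeCon_iff.1 huv, rfl⟩
  have hadd := (monomialCon (latticeIdeal A L)).add hw (AddCon.refl _ (u ⊓ v))
  rwa [toNat_toInt_sub_add_inf, neg_sub, inf_comm, toNat_toInt_sub_add_inf] at hadd

theorem binomialIdeal_eq_latticeIdeal {r : (τ →₀ ℕ) → (τ →₀ ℕ) → Prop}
    {L : Submodule ℤ (τ →₀ ℤ)} (h : addConGen r = latticeCon L) :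
    binomialIdeal A r = latticeIdeal A L := by
  refine le_antisymm (Ideal.span_le.2 ?_) (Ideal.span_le.2 ?_)
  · rintro _ ⟨u, v, huv, rfl⟩
    have hL : latticeCon L u v := h ▸ AddCon.le_addConGen _ _ huv
    exact monomialCon_iff.1 <| latticeCon_le_monomialCon_latticeIdeal A L hL
  · rintro _ ⟨w, hw, rfl⟩
    have hr : addConGen r (toNat w) (toNat (-w)) := by
      rwa [h, latticeCon_iff, toInt_toNat_sub_toInt_toNat_neg]
    exact monomialCon_iff.1 <| addConGen_le_monomialCon_binomialIdeal A r hr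

end LatticeIdeal

section PrincipalMinors

variable {σ : Type*}

/-- The relation on exponents whose binomials are the principal 2-minors `x_{ii} x_{jj} - x_{ij}²`.
The case `i = j` is allowed and relates `2 e_{ii}` to itself. -/
inductive MinorRel : (Sym2 σ →₀ ℕ) → (Sym2 σ →₀ ℕ) → Prop
  | minor (i j : σ) :
    MinorRel (Finsupp.single s(i, i) 1 + Finsupp.single s(j, j) 1) (Finsupp.single s(i, j) 2)

variable (σ) in
/-- The principal minor lattice, generated by the vectors `e_{ii} + e_{jj} - 2 e_{ij}`. -/
noncomputable def minorLattice : Submodule ℤ (Sym2 σ →₀ ℤ) :=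
  Submodule.span ℤ {w | ∃ i j, w =
    Finsupp.single s(i, i) 1 + Finsupp.single s(j, j) 1 - 2 • Finsupp.single s(i, j) 1}

variable (σ) in
/-- The principal minor ideal; the generators with `i = j` vanish. -/
noncomputable def minorIdeal (A : Type*) [CommRing A] : Ideal (MvPolynomial (Sym2 σ) A) :=
  Ideal.span {f | ∃ i j : σ, f = X s(i, i) * X s(j, j) - X s(i, j) ^ 2}

lemma minorIdeal_eq_binomialIdeal (A : Type*) [CommRing A] :
    minorIdeal σ A = binomialIdeal A MinorRel := by
  have hminor (i j : σ) : (X s(i, i) * X s(j, j) - X s(i, j) ^ 2 : MvPolynomial (Sym2 σ) A) =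
      monomial (Finsupp.single s(i, i) 1 + Finsupp.single s(j, j) 1) 1
        - monomial (Finsupp.single s(i, j) 2) 1 := by
    rw [X_pow_eq_monomial, X, X, monomial_mul, one_mul]
  unfold minorIdeal binomialIdeal
  congr 1
  ext f
  constructor
  · rintro ⟨i, j, rfl⟩
    exact ⟨_, _, .minor i j, hminor i j⟩
  · rintro ⟨_, _, ⟨i, j⟩, rfl⟩
    exact ⟨i, j, (hminor i j).symm⟩

lemma addConGen_minorRel_le_latticeCon :
    addConGen (MinorRel (σ := σ)) ≤ latticeCon (minorLattice σ) := by
  refine AddCon.addConGen_le.2 ?_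
  rintro _ _ ⟨i, j⟩
  exact latticeCon_iff.2 <| Submodule.subset_span ⟨i, j, by simp⟩

/-- The Veronese grading `ℤ^{Sym2 σ} → ℤ^σ`, `e_{ij} ↦ e_i + e_j`. -/
noncomputable def veroneseDegree : (Sym2 σ →₀ ℤ) →ₗ[ℤ] (σ →₀ ℤ) :=
  Finsupp.linearCombination ℤ <| Sym2.lift
    ⟨fun i j ↦ Finsupp.single i 1 + Finsupp.single j 1, fun _ _ ↦ add_comm _ _⟩

lemma veroneseDegree_single (i j : σ) (m : ℤ) :
    veroneseDegree (Finsupp.single s(i, j) m) = Finsupp.single i m + Finsupp.single j m := by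
  simp [veroneseDegree]

lemma veroneseDegree_eq_zero_of_mem_minorLattice {w : Sym2 σ →₀ ℤ} (hw : w ∈ minorLattice σ) :
    veroneseDegree w = 0 := by
  suffices minorLattice σ ≤ LinearMap.ker veroneseDegree from this hw
  refine Submodule.span_le.2 ?_
  rintro _ ⟨i, j, rfl⟩
  simp only [SetLike.mem_coe, LinearMap.mem_ker, map_sub, map_add, map_nsmul,
    veroneseDegree_single]
  abel

lemma even_of_mem_minorLattice {w : Sym2 σ →₀ ℤ} (hw : w ∈ minorLattice σ) {s : Sym2 σ}
    (hs : ¬ s.IsDiag) : Even (w s) := by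
  classical
  induction hw using Submodule.span_induction with
  | mem w hw =>
    obtain ⟨i, j, rfl⟩ := hw
    have hdiag (l : σ) : s(l, l) ≠ s := by
      rintro rfl
      exact hs rfl
    simp only [Finsupp.sub_apply, Finsupp.add_apply, Finsupp.smul_apply, Finsupp.single_apply,
      hdiag, if_false, add_zero, zero_sub, even_neg]
    exact ⟨_, two_nsmul _⟩
  | zero => simp
  | add w w' _ _ hw hw' => exact hw.add hw'
  | smul m w _ hw => exact hw.mul_left m

lemma veroneseDegree_apply_of_offDiag_eq_zero {w : Sym2 σ →₀ ℤ}
    (hw : ∀ s : Sym2 σ, ¬ s.IsDiag → w s = 0) (i : σ) :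
    veroneseDegree w i = 2 * w s(i, i) := by
  have hsum : veroneseDegree w i = w.sum fun s m ↦ veroneseDegree (Finsupp.single s m) i := by
    conv_lhs => rw [← w.sum_single, map_finsuppSum, Finsupp.sum_apply]
  rw [hsum, Finsupp.sum_eq_single s(i, i) _ (by simp), veroneseDegree_single]
  · simp [two_mul]
  · intro s hs hsi
    have hdiag : s.IsDiag := not_not.1 (mt (hw s) hs)
    induction s using Sym2.ind with
    | _ a b =>
      obtain rfl : a = b := hdiag
      have hai : a ≠ i := by
        rintro rfl
        exact hsi rfl
      simp [veroneseDegree_single, hai]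

/-- An exponent vector is reduced if it is squarefree off the diagonal. -/
def IsReduced (u : Sym2 σ →₀ ℕ) : Prop := ∀ s : Sym2 σ, ¬ s.IsDiag → u s ≤ 1

lemma IsReduced.eq_of_latticeCon {u v : Sym2 σ →₀ ℕ} (hu : IsReduced u) (hv : IsReduced v)
    (huv : latticeCon (minorLattice σ) u v) : u = v := by
  have hmem := latticeCon_iff.1 huv
  have hoff (s : Sym2 σ) (hs : ¬ s.IsDiag) : u s = v s := by
    obtain ⟨m, hm⟩ := even_of_mem_minorLattice hmem hs
    have := hu s hs
    have := hv s hs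
    simp only [Finsupp.sub_apply, toInt_apply] at hm
    omega
  have hdiag (i : σ) : u s(i, i) = v s(i, i) := by
    have hdeg := veroneseDegree_apply_of_offDiag_eq_zero (w := toInt u - toInt v)
      (fun s hs ↦ by simp [hoff s hs]) i
    simp only [veroneseDegree_eq_zero_of_mem_minorLattice hmem, Finsupp.coe_zero, Pi.zero_apply,
      Finsupp.sub_apply, toInt_apply] at hdeg
    omega
  ext s
  by_cases hs : s.IsDiag
  · induction s using Sym2.ind with
    | _ i j =>
      obtain rfl : i = j := hs
      exact hdiag i
  · exact hoff s hs

lemma IsReduced.mono {u v : Sym2 σ →₀ ℕ} (hv : IsReduced v) (huv : u ≤ v) : IsReduced u :=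
  fun s hs ↦ (huv s).trans (hv s hs)

lemma IsReduced.add_single_self {u : Sym2 σ →₀ ℕ} (hu : IsReduced u) (i : σ) (m : ℕ) :
    IsReduced (u + Finsupp.single s(i, i) m) := by
  classical
  intro s hs
  have hne : s(i, i) ≠ s := by
    rintro rfl
    exact hs rfl
  simpa [Finsupp.single_apply, hne] using hu s hs

lemma IsReduced.exists_addConGen_add_single_one {u : Sym2 σ →₀ ℕ} (hu : IsReduced u) (s : Sym2 σ) :
    ∃ v, IsReduced v ∧ addConGen MinorRel (u + Finsupp.single s 1) v := by
  classical
  by_cases hs : IsReduced (u + Finsupp.single s 1)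
  · exact ⟨_, hs, AddCon.refl _ _⟩
  have hpos : 1 ≤ u s := by
    contrapose! hs
    intro t ht
    have hut := hu t ht
    rw [Finsupp.add_apply, Finsupp.single_apply]
    split_ifs with hst
    · subst hst
      omega
    · exact hut
  obtain ⟨u', rfl⟩ : ∃ u', u = u' + Finsupp.single s 1 :=
    ⟨_, (tsub_add_cancel_of_le (Finsupp.single_le_iff.2 hpos)).symm⟩
  induction s using Sym2.ind with
  | _ i j =>
    refine ⟨u' + (Finsupp.single s(i, i) 1 + Finsupp.single s(j, j) 1), ?_, ?_⟩
    · rw [← add_assoc]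
      exact ((hu.mono le_self_add).add_single_self i 1).add_single_self j 1
    · rw [add_assoc, ← Finsupp.single_add]
      exact (addConGen MinorRel).add (AddCon.refl _ u')
        (AddCon.symm _ (AddCon.le_addConGen _ _ (.minor i j)))

lemma exists_isReduced_addConGen_minorRel (u : Sym2 σ →₀ ℕ) :
    ∃ v, IsReduced v ∧ addConGen MinorRel u v := by
  induction u using Finsupp.induction₂ with
  | zero => exact ⟨0, fun _ _ ↦ Nat.zero_le _, AddCon.refl _ _⟩
  | add_single s m u _ hm hu =>
    clear hm
    induction m with
    | zero => simpa using hu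
    | succ m ih =>
      obtain ⟨v, hv, huv⟩ := ih
      obtain ⟨v', hv', hvv'⟩ := hv.exists_addConGen_add_single_one s
      refine ⟨v', hv', AddCon.trans _ ?_ hvv'⟩
      rw [Finsupp.single_add, ← add_assoc]
      exact AddCon.add _ huv (AddCon.refl _ _)

theorem addConGen_minorRel_eq_latticeCon :
    addConGen (MinorRel (σ := σ)) = latticeCon (minorLattice σ) := by
  refine le_antisymm addConGen_minorRel_le_latticeCon fun u v huv ↦ ?_
  obtain ⟨u', hu', huu'⟩ := exists_isReduced_addConGen_minorRel u
  obtain ⟨v', hv', hvv'⟩ := exists_isReduced_addConGen_minorRel v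
  have huv' : latticeCon (minorLattice σ) u' v' :=
    ((addConGen_minorRel_le_latticeCon huu').symm.trans huv).trans
      (addConGen_minorRel_le_latticeCon hvv')
  obtain rfl := hu'.eq_of_latticeCon hv' huv'
  exact huu'.trans hvv'.symm

variable (σ) in
theorem principal_minor_ideal_is_lattice_ideal_general (A : Type*) [CommRing A] :
    minorIdeal σ A = latticeIdeal A (minorLattice σ) := by
  rw [minorIdeal_eq_binomialIdeal, binomialIdeal_eq_latticeIdeal A addConGen_minorRel_eq_latticeCon]

end PrincipalMinors

lemma Jideal_eq_minorIdeal : Jideal n k = minorIdeal (Fin n) k := by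
  refine le_antisymm (Ideal.span_mono ?_) (Ideal.span_le.2 ?_)
  · rintro _ ⟨i, j, -, rfl⟩
    exact ⟨i, j, rfl⟩
  · rintro _ ⟨i, j, rfl⟩
    rcases lt_trichotomy i j with hij | rfl | hij
    · exact Ideal.subset_span ⟨i, j, hij, rfl⟩
    · simp [pow_two]
    · exact Ideal.subset_span ⟨j, i, hij, by rw [mul_comm, Sym2.eq_swap (a := i) (b := j)]⟩

lemma L'lat_eq_map_minorLattice :
    L'lat n = (minorLattice (Fin n)).map
      (Finsupp.linearEquivFunOnFinite ℤ ℤ (Sym2 (Fin n))).toLinearMap := by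
  have hminor (i j : Fin n) : Finsupp.linearEquivFunOnFinite ℤ ℤ _
      (Finsupp.single s(i, i) 1 + Finsupp.single s(j, j) 1 - 2 • Finsupp.single s(i, j) 1) =
        minorVec n i j := by
    simp only [map_sub, map_add, map_nsmul, Finsupp.linearEquivFunOnFinite_single]
    rfl
  rw [minorLattice, Submodule.map_span]
  refine le_antisymm (Submodule.span_mono ?_) (Submodule.span_le.2 ?_)
  · rintro _ ⟨i, j, -, rfl⟩
    exact ⟨_, ⟨i, j, rfl⟩, hminor i j⟩
  · rintro _ ⟨_, ⟨i, j, rfl⟩, rfl⟩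
    rw [LinearEquiv.coe_coe, hminor]
    rcases lt_trichotomy i j with hij | rfl | hij
    · exact Submodule.subset_span ⟨i, j, hij, rfl⟩
    · rw [minorVec, two_nsmul, sub_self]
      exact zero_mem _
    · exact Submodule.subset_span ⟨j, i, hij, by rw [minorVec, minorVec, add_comm, e_comm n i j]⟩

lemma latticeIdeal_minorLattice_fin : latticeIdeal k (minorLattice (Fin n)) =
    Ideal.span {f : R n k | ∃ u ∈ L'lat n,
      f = monomial (posPart n u) (1 : k) - monomial (posPart n (-u)) (1 : k)} := by
  have hpos (w : Sym2 (Fin n) →₀ ℤ) :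
      posPart n (Finsupp.linearEquivFunOnFinite ℤ ℤ _ w) = toNat w := by
    ext s
    rfl
  simp only [latticeIdeal, L'lat_eq_map_minorLattice, Submodule.mem_map, exists_exists_and_eq_and,
    LinearEquiv.coe_coe, ← map_neg, hpos]

/-- `J_n` is the lattice ideal of `L'_n`: every binomial
`x^{u⁺} - x^{u⁻}` with `u ∈ L'_n` lies in `J_n`, and these binomials generate `J_n`. -/
theorem principal_minor_ideal_is_lattice_ideal (n : ℕ) (hn : 2 ≤ n)
    (k : Type*) [Field k] :
    (∀ u ∈ L'lat n,
      monomial (posPart n u) (1 : k) - monomial (posPart n (-u)) (1 : k) ∈ Jideal n k) ∧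
    Jideal n k = Ideal.span {f : R n k | ∃ u ∈ L'lat n,
      f = monomial (posPart n u) (1 : k) - monomial (posPart n (-u)) (1 : k)} := by
  rw [Jideal_eq_minorIdeal, principal_minor_ideal_is_lattice_ideal_general,
    latticeIdeal_minorLattice_fin]
  exact ⟨fun u hu ↦ Ideal.subset_span ⟨u, hu, rfl⟩, rfl⟩

end Veronese
end

section
/- Suppose char k ≠ 2. Then there exist N = 2^{c_{n−1}} ℤ₂-twistings φ_1, …, φ_N of k[x] such that the ideals φ_1(I_n), …, φ_N(I_n) are pairwise distinct prime ideals and J_n = φ_1(I_n) ∩ ⋯ ∩ φ_N(I_n); this is a prime (hence primary) decomposition of the complete intersection J_n. -/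
/-!
Fix a base point `o`. A family of signs that is trivial on the diagonal can be rescaled to be
trivial on row `o` as well, which leaves one free sign for each of the `C(n - 1, 2)` pairs
avoiding `o`. The `ε`-twist of `I_n` is the kernel of `x_{ij} ↦ ε_{ij} t_i t_j`; it is prime,
contains `J_n`, and determines `ε` through the binomials
`x_{ij} x_{oo} - ε_{ij} x_{io} x_{jo}`.

Conversely, modulo `J_n` every polynomial is a combination `g` of monomials in which no
off-diagonal variable is repeated. The parametrization twisted by `ε` sends `x^u` to
`χ_u(ε) t^{V u}`, where `χ_u` is a character of the group of signs. Among exponents without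
off-diagonal repetition, `u` can be recovered from `V u` and `χ_u`: the character gives the
parities of the free entries, the parity of `V u` gives those of row `o`, and `V u` then gives
the diagonal. If `g` lies in all the twisted ideals, each homogeneous part of `g` is thus a
vanishing combination of distinct characters, so `g = 0` by Dedekind.
-/

open scoped BigOperators

namespace Veronese

open MvPolynomial

variable (n : ℕ)

variable (k : Type*) [Field k]

lemma intCast_units_injective {A : Type*} [Ring A] (h2 : (2 : A) ≠ 0) :
    Function.Injective fun z : ℤˣ => ((z : ℤ) : A) := by
  have hne : (1 : A) ≠ -1 := fun h => h2 <| by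
    rw [← one_add_one_eq_two, eq_neg_iff_add_eq_zero.mp h]
  intro z w hzw
  obtain rfl | rfl := Int.units_eq_one_or z <;> obtain rfl | rfl := Int.units_eq_one_or w <;>
    simp_all [eq_comm]

section SignTwist

variable {σ A : Type*} [CommRing A]

lemma aeval_sign_smul_X_comp_self (ε : σ → ℤˣ) :
    (aeval fun s => ε s • X s : MvPolynomial σ A →ₐ[A] MvPolynomial σ A).comp
      (aeval fun s => ε s • X s) = AlgHom.id A _ := by
  ext1 s
  simp [map_zsmul_unit, smul_smul]

/-- The `ℤ₂`-twisting `x_s ↦ ε_s x_s` given by a family of signs `ε`, over any index type. -/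
noncomputable def signTwist (ε : σ → ℤˣ) : MvPolynomial σ A ≃ₐ[A] MvPolynomial σ A :=
  AlgEquiv.ofAlgHom (aeval fun s => ε s • X s) (aeval fun s => ε s • X s)
    (aeval_sign_smul_X_comp_self ε) (aeval_sign_smul_X_comp_self ε)

@[simp]
lemma signTwist_X (ε : σ → ℤˣ) (s : σ) :
    signTwist ε (X s : MvPolynomial σ A) = ε s • X s := by
  simp [signTwist]

/-- The character `ε ↦ ∏ ε_s ^ u_s`: the sign by which `signTwist ε` acts on the monomial `x^u`. -/
def monomialSign (u : σ →₀ ℕ) : (σ → ℤˣ) →* ℤˣ where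
  toFun ε := u.prod fun s m => ε s ^ m
  map_one' := by simp
  map_mul' ε δ := by simp [mul_pow]

lemma signTwist_monomial (ε : σ → ℤˣ) (u : σ →₀ ℕ) (a : A) :
    signTwist ε (monomial u a) = monomialSign u ε • monomial u a :=
  calc signTwist ε (monomial u a)
      = C a * u.prod fun s m => (ε s • X s) ^ m := aeval_monomial _ _ _
    _ = C a * (monomialSign u ε • u.prod fun s m => X s ^ m) := by
        simp [monomialSign, Finsupp.prod, Units.smul_def, zsmul_eq_mul, mul_pow,
          Finset.prod_mul_distrib]
    _ = monomialSign u ε • monomial u a := by rw [mul_smul_comm, ← monomial_eq]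

lemma monomialSign_mulSingle [DecidableEq σ] (u : σ →₀ ℕ) (s : σ) (z : ℤˣ) :
    monomialSign u (Pi.mulSingle s z) = z ^ u s := by
  change (u.prod fun t m => (Pi.mulSingle s z : σ → ℤˣ) t ^ m) = z ^ u s
  rw [Finsupp.prod_eq_single s]
  · simp
  · intro t _ hts
    simp [hts]
  · simp

end SignTwist

section NormalizedSigns

variable {α : Type*}

/-- The families of signs that are trivial on the diagonal and on the row of the base point `o`.
Rescaling the parameters `t_i` by signs moves any family trivial on the diagonal to exactly one of
these without changing the twisted Veronese ideal, so they index the distinct components. -/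
def normalizedSigns (o : α) : Subgroup (Sym2 α → ℤˣ) :=
  Subgroup.pi {s | s.IsDiag ∨ o ∈ s} fun _ => ⊥

lemma mem_normalizedSigns {o : α} {ε : Sym2 α → ℤˣ} :
    ε ∈ normalizedSigns o ↔ ∀ s : Sym2 α, s.IsDiag ∨ o ∈ s → ε s = 1 := by
  simp [normalizedSigns, Subgroup.mem_pi]

lemma mulSingle_mem_normalizedSigns [DecidableEq α] {o : α} {s : Sym2 α} (hs : ¬s.IsDiag)
    (hos : o ∉ s) (z : ℤˣ) : Pi.mulSingle s z ∈ normalizedSigns o := by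
  rw [mem_normalizedSigns]
  rintro t ht
  have hts : t ≠ s := by
    rintro rfl
    exact ht.elim hs hos
  simp [hts]

lemma card_offDiag_pairs_avoiding [Fintype α] [DecidableEq α] (o : α) :
    Fintype.card {s : Sym2 α // ¬(s.IsDiag ∨ o ∈ s)} = (Fintype.card α - 1).choose 2 := by
  rw [← Finset.card_univ (α := α), ← Finset.card_erase_of_mem (Finset.mem_univ o),
    ← Sym2.card_image_offDiag, Fintype.card_subtype]
  congr 1
  ext s
  simp only [Finset.mem_filter_univ, Finset.mem_image, Finset.mem_offDiag, Finset.mem_erase]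
  constructor
  · induction s using Sym2.ind with
    | _ i j => exact fun h => ⟨(i, j), by simp_all [eq_comm], rfl⟩
  · rintro ⟨⟨i, j⟩, hij, rfl⟩
    simp_all [eq_comm]

lemma card_normalizedSigns [Fintype α] (o : α) :
    Nat.card (normalizedSigns o) = 2 ^ (Fintype.card α - 1).choose 2 := by
  classical
  have e : normalizedSigns o ≃ ({s : Sym2 α // ¬(s.IsDiag ∨ o ∈ s)} → ℤˣ) :=
    (Equiv.subtypeEquivRight fun ε => by
      simp only [mem_normalizedSigns, _root_.funext_iff, Subtype.forall]
      rfl).trans (Equiv.subtypePreimage (fun s : Sym2 α => s.IsDiag ∨ o ∈ s) fun _ => 1)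
  rw [Nat.card_congr e, Nat.card_fun, Nat.card_eq_fintype_card (α := ℤˣ), Fintype.card_units_int,
    Nat.card_eq_fintype_card, card_offDiag_pairs_avoiding]

/-- The exponents of the normal form modulo the principal minors: no off-diagonal variable occurs
more than once. -/
def offDiagSquarefree (α : Type*) : Set (Sym2 α →₀ ℕ) :=
  {u | ∀ s : Sym2 α, ¬s.IsDiag → u s ≤ 1}

lemma eq_one_of_single_add_notMem_offDiagSquarefree {u : Sym2 α →₀ ℕ}
    (hu : u ∈ offDiagSquarefree α) {s : Sym2 α}
    (hsu : Finsupp.single s 1 + u ∉ offDiagSquarefree α) : ¬s.IsDiag ∧ u s = 1 := by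
  classical
  simp only [offDiagSquarefree, Set.mem_ofPred_eq, not_forall] at hsu
  obtain ⟨t, ht, hlt⟩ := hsu
  have hut := hu t ht
  rw [Finsupp.add_apply, Finsupp.single_apply] at hlt
  obtain rfl : s = t := by
    by_contra hst
    simp [hst, hut] at hlt
  exact ⟨ht, by simp only [if_true] at hlt; omega⟩

lemma apply_eq_of_monomialSign_eq {o : α} {u v : Sym2 α →₀ ℕ} (hu : u ∈ offDiagSquarefree α)
    (hv : v ∈ offDiagSquarefree α)
    (h : ∀ ε ∈ normalizedSigns o, monomialSign u ε = monomialSign v ε)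
    {s : Sym2 α} (hs : ¬s.IsDiag) (hos : o ∉ s) : u s = v s := by
  classical
  have hsign := h _ (mulSingle_mem_normalizedSigns hs hos (-1))
  rw [monomialSign_mulSingle, monomialSign_mulSingle] at hsign
  obtain hu0 | hu1 := Nat.le_one_iff_eq_zero_or_eq_one.mp (hu s hs) <;>
  obtain hv0 | hv1 := Nat.le_one_iff_eq_zero_or_eq_one.mp (hv s hs) <;>
  simp_all

end NormalizedSigns

section VeroneseDegree

variable {n}

lemma wtN_eq_zero_of_notMem {s : Sym2 (Fin n)} {i : Fin n} (h : i ∉ s) : wtN n s i = 0 := by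
  induction s using Sym2.ind with
  | _ a b => simp_all [wtN]

lemma VN_apply (u : Sym2 (Fin n) →₀ ℕ) (i : Fin n) :
    VN n u i = 2 * u s(i, i) + ∑ j ∈ Finset.univ.erase i, u s(i, j) := by
  have hinj : Function.Injective fun j => s(i, j) := fun _ _ => Sym2.congr_right.mp
  calc ∑ s, u s * wtN n s i
      = ∑ s ∈ Finset.univ.image fun j => s(i, j), u s * wtN n s i := by
        refine (Finset.sum_subset (Finset.subset_univ _) fun s _ hs => ?_).symm
        rw [wtN_eq_zero_of_notMem, mul_zero]
        rintro ⟨j, rfl⟩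
        simp at hs
    _ = ∑ j, u s(i, j) * wtN n s(i, j) i := Finset.sum_image hinj.injOn
    _ = u s(i, i) * wtN n s(i, i) i + ∑ j ∈ Finset.univ.erase i, u s(i, j) * wtN n s(i, j) i :=
        (Finset.add_sum_erase _ _ (Finset.mem_univ i)).symm
    _ = 2 * u s(i, i) + ∑ j ∈ Finset.univ.erase i, u s(i, j) := by
        congr 1
        · simp [wtN, mul_comm]
        · refine Finset.sum_congr rfl fun j hj => ?_
          simp [wtN, (Finset.ne_of_mem_erase hj).symm]

lemma eq_of_VN_eq_of_offDiag_eq {u v : Sym2 (Fin n) →₀ ℕ} (hV : VN n u = VN n v)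
    (h : ∀ s : Sym2 (Fin n), ¬s.IsDiag → u s = v s) : u = v := by
  ext s
  by_cases hs : s.IsDiag
  · induction s using Sym2.ind with
    | _ i j =>
      obtain rfl : i = j := hs
      have hVi := congrFun hV i
      rw [VN_apply, VN_apply, Finset.sum_congr rfl fun j hj =>
        h s(i, j) (by simpa using (Finset.ne_of_mem_erase hj).symm)] at hVi
      omega
  · exact h s hs

/-- `V_i` is twice the diagonal entry plus the off-diagonal ones, so its parity pins down the only
unknown off-diagonal entry of row `i`. -/
lemma apply_basepoint_eq_of_VN_eq {o i : Fin n} (hi : i ≠ o) {u v : Sym2 (Fin n) →₀ ℕ}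
    (hu : u ∈ offDiagSquarefree (Fin n)) (hv : v ∈ offDiagSquarefree (Fin n))
    (hV : VN n u i = VN n v i)
    (h : ∀ s : Sym2 (Fin n), ¬s.IsDiag → o ∉ s → u s = v s) : u s(i, o) = v s(i, o) := by
  have ho : o ∈ Finset.univ.erase i := by simp [hi.symm]
  have hrow : ∑ j ∈ (Finset.univ.erase i).erase o, u s(i, j) =
      ∑ j ∈ (Finset.univ.erase i).erase o, v s(i, j) := by
    refine Finset.sum_congr rfl fun j hj => h _ ?_ ?_
    · simp_all [eq_comm]
    · simp_all [eq_comm]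
  rw [VN_apply, VN_apply, ← Finset.add_sum_erase _ _ ho, ← Finset.add_sum_erase _ _ ho,
    hrow] at hV
  have hdiag : ¬s(i, o).IsDiag := hi
  have := hu _ hdiag
  have := hv _ hdiag
  omega

lemma eq_of_VN_eq_of_monomialSign_eq {o : Fin n} {u v : Sym2 (Fin n) →₀ ℕ}
    (hu : u ∈ offDiagSquarefree (Fin n)) (hv : v ∈ offDiagSquarefree (Fin n))
    (hV : VN n u = VN n v)
    (h : ∀ ε ∈ normalizedSigns o, monomialSign u ε = monomialSign v ε) : u = v := by
  have havoid : ∀ s : Sym2 (Fin n), ¬s.IsDiag → o ∉ s → u s = v s :=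
    fun _ => apply_eq_of_monomialSign_eq hu hv h
  refine eq_of_VN_eq_of_offDiag_eq hV fun s hs => ?_
  by_cases hos : o ∈ s
  · obtain ⟨i, rfl⟩ := hos
    rw [Sym2.eq_swap]
    exact apply_basepoint_eq_of_VN_eq (Ne.symm hs) hu hv (congrFun hV i) havoid
  · exact havoid s hs hos

end VeroneseDegree

section TwistedVeronese

variable {n k}

lemma isTwisting_signTwist (ε : Sym2 (Fin n) → ℤˣ) : IsTwisting n k (signTwist ε) := by
  intro s
  rw [signTwist_X]
  obtain h | h := Int.units_eq_one_or (ε s) <;> simp [h]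

variable (k) in
/-- The sign-twisted Veronese parametrization `x_{ij} ↦ ε_{ij} t_i t_j`. -/
noncomputable def signedVeroHom (ε : Sym2 (Fin n) → ℤˣ) : R n k →ₐ[k] MvPolynomial (Fin n) k :=
  (veroHom n k).comp (signTwist ε).toAlgHom

lemma signedVeroHom_X (ε : Sym2 (Fin n) → ℤˣ) (i j : Fin n) :
    signedVeroHom k ε (X s(i, j)) = ε s(i, j) • (X i * X j) := by
  simp [signedVeroHom, veroHom, map_zsmul_unit]

lemma map_signTwist_Iideal (ε : Sym2 (Fin n) → ℤˣ) :
    Ideal.map (signTwist ε).toAlgHom (Iideal n k) = RingHom.ker (signedVeroHom k ε) :=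
  Ideal.map_comap_of_equiv (signTwist ε).toRingEquiv

lemma isPrime_map_signTwist_Iideal (ε : Sym2 (Fin n) → ℤˣ) :
    (Ideal.map (signTwist ε).toAlgHom (Iideal n k)).IsPrime := by
  rw [map_signTwist_Iideal]
  exact RingHom.ker_isPrime _

lemma Jideal_le_map_signTwist {ε : Sym2 (Fin n) → ℤˣ} (hε : ∀ i, ε s(i, i) = 1) :
    Jideal n k ≤ Ideal.map (signTwist ε).toAlgHom (Iideal n k) := by
  rw [map_signTwist_Iideal, Jideal, Ideal.span_le]
  rintro _ ⟨i, j, -, rfl⟩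
  simp only [SetLike.mem_coe, RingHom.mem_ker, map_sub, map_mul, map_pow, signedVeroHom_X, hε,
    one_smul, smul_pow, Int.units_sq]
  ring

/-- As `t_i t_j t_o²` is not a zero divisor, the binomial lies in the `δ`-twisted Veronese ideal
only if `δ_{ij} = z`. -/
lemma signedVeroHom_binomial {o : Fin n} {δ : Sym2 (Fin n) → ℤˣ} (hδ : δ ∈ normalizedSigns o)
    (z : ℤˣ) (i j : Fin n) :
    signedVeroHom k δ (X s(i, j) * X s(o, o) - z • (X s(i, o) * X s(j, o))) =
      C (((δ s(i, j) : ℤ) : k) - ((z : ℤ) : k)) * (X i * X j * X o ^ 2) := by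
  have hδo : ∀ l, δ s(l, o) = 1 := fun l => mem_normalizedSigns.mp hδ _ (.inr (by simp))
  simp only [map_sub, map_mul, signedVeroHom_X, hδo, one_smul, Units.smul_def,
    zsmul_eq_mul, map_intCast]
  ring

lemma map_signTwist_injective (hk : (2 : k) ≠ 0) (o : Fin n) :
    Function.Injective fun ε : normalizedSigns o =>
      Ideal.map (signTwist ε.1).toAlgHom (Iideal n k) := by
  intro ε δ h
  simp only [map_signTwist_Iideal] at h
  ext1
  funext s
  induction s using Sym2.ind with
  | _ i j =>
    have hmem : X s(i, j) * X s(o, o) - ε.1 s(i, j) • (X s(i, o) * X s(j, o)) ∈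
        RingHom.ker (signedVeroHom k ε.1) := by
      rw [RingHom.mem_ker, signedVeroHom_binomial ε.2, sub_self, C_0, zero_mul]
    rw [h, RingHom.mem_ker, signedVeroHom_binomial δ.2] at hmem
    have hcast : ((δ.1 s(i, j) : ℤ) : k) = ((ε.1 s(i, j) : ℤ) : k) := by
      simpa [X_ne_zero, sub_eq_zero, -map_sub, -map_intCast] using hmem
    exact (intCast_units_injective hk hcast).symm

end TwistedVeronese

section NormalForm

variable {n k}

lemma principalMinor_mem_Jideal {i j : Fin n} (hij : i ≠ j) :
    (X s(i, i) * X s(j, j) - X s(i, j) ^ 2 : R n k) ∈ Jideal n k := by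
  obtain h | h := hij.lt_or_gt
  · exact Ideal.subset_span ⟨i, j, h, rfl⟩
  · exact Ideal.subset_span ⟨j, i, h, by rw [mul_comm, Sym2.eq_swap (a := i) (b := j)]⟩

lemma X_mul_X_mul_monomial_erase_mem_restrictSupport {u : Sym2 (Fin n) →₀ ℕ}
    (hu : u ∈ offDiagSquarefree (Fin n)) (i j : Fin n) (s : Sym2 (Fin n)) :
    (X s(i, i) * X s(j, j) * monomial (u.erase s) 1 : R n k) ∈
      restrictSupport k (offDiagSquarefree (Fin n)) := by
  rw [X, X, monomial_mul, monomial_mul, monomial_mem_restrictSupport]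
  refine .inl fun t ht => ?_
  have hit : s(i, i) ≠ t := by
    rintro rfl
    exact ht rfl
  have hjt : s(j, j) ≠ t := by
    rintro rfl
    exact ht rfl
  have herase : u.erase s t ≤ u t := by
    rw [Finsupp.erase_apply]
    split_ifs <;> simp
  simpa [hit, hjt] using herase.trans (hu t ht)

lemma X_mul_monomial_mem_restrictSupport_sup_Jideal {u : Sym2 (Fin n) →₀ ℕ}
    (hu : u ∈ offDiagSquarefree (Fin n)) (s : Sym2 (Fin n)) :
    (X s * monomial u 1 : R n k) ∈
      restrictSupport k (offDiagSquarefree (Fin n)) ⊔ (Jideal n k).restrictScalars k := by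
  by_cases hsu : Finsupp.single s 1 + u ∈ offDiagSquarefree (Fin n)
  · refine Submodule.mem_sup_left ?_
    rw [X, monomial_mul, monomial_mem_restrictSupport]
    exact .inl hsu
  · obtain ⟨hs, hus⟩ := eq_one_of_single_add_notMem_offDiagSquarefree hu hsu
    induction s using Sym2.ind with
    | _ i j =>
      have hfactor : (monomial u 1 : R n k) = X s(i, j) * monomial (u.erase s(i, j)) 1 := by
        rw [X, monomial_mul, one_mul, ← hus, Finsupp.single_add_erase]
      have hrewrite : (X s(i, j) * monomial u 1 : R n k) =
          X s(i, i) * X s(j, j) * monomial (u.erase s(i, j)) 1 +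
            -monomial (u.erase s(i, j)) 1 * (X s(i, i) * X s(j, j) - X s(i, j) ^ 2) := by
        rw [hfactor]
        ring
      rw [hrewrite]
      exact Submodule.add_mem_sup (X_mul_X_mul_monomial_erase_mem_restrictSupport hu i j _)
        (Ideal.mul_mem_left _ _ (principalMinor_mem_Jideal hs))

lemma restrictSupport_sup_Jideal_eq_top :
    restrictSupport k (offDiagSquarefree (Fin n)) ⊔ (Jideal n k).restrictScalars k = ⊤ := by
  set W := restrictSupport k (offDiagSquarefree (Fin n)) ⊔ (Jideal n k).restrictScalars k
  have hX : ∀ s, W ≤ W.comap (LinearMap.mulLeft k (X s)) := by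
    refine fun s => sup_le ?_ fun r hr => Submodule.mem_sup_right (Ideal.mul_mem_left _ _ hr)
    rw [restrictSupport_eq_span, Submodule.span_le]
    rintro _ ⟨u, hu, rfl⟩
    exact X_mul_monomial_mem_restrictSupport_sup_Jideal hu s
  refine eq_top_iff.mpr fun f _ => ?_
  induction f using MvPolynomial.induction_on with
  | C a =>
    refine Submodule.mem_sup_left ?_
    rw [← monomial_zero', monomial_mem_restrictSupport]
    exact .inl fun s _ => Nat.zero_le 1
  | add f g hf hg => exact W.add_mem (hf trivial) (hg trivial)
  | mul_X f s hf =>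
    rw [mul_comm]
    exact hX s (hf trivial)

end NormalForm

section Separation

variable {n k}

lemma veroHom_X (s : Sym2 (Fin n)) :
    veroHom n k (X s) = monomial (Finsupp.equivFunOnFinite.symm (wtN n s)) 1 := by
  induction s using Sym2.ind with
  | _ i j =>
    have hwt : Finsupp.equivFunOnFinite.symm (wtN n s(i, j)) =
        Finsupp.single i 1 + Finsupp.single j 1 := by
      ext l
      simp [wtN, Finsupp.single_apply, eq_comm]
    rw [hwt, veroHom, aeval_X, Sym2.lift_mk]
    simp [X, monomial_mul]

lemma veroHom_monomial (u : Sym2 (Fin n) →₀ ℕ) (a : k) :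
    veroHom n k (monomial u a) = monomial (Finsupp.equivFunOnFinite.symm (VN n u)) a := by
  have hVN : Finsupp.equivFunOnFinite.symm (VN n u) =
      ∑ s, u s • Finsupp.equivFunOnFinite.symm (wtN n s) := by
    ext i
    simp [VN]
  rw [monomial_eq, map_mul, Finsupp.prod_fintype _ _ (by simp), map_prod, algHom_C,
    algebraMap_eq, hVN]
  simp only [map_pow, veroHom_X, monomial_pow, one_pow, ← monomial_sum_one, C_mul_monomial, mul_one]

lemma signedVeroHom_monomial (ε : Sym2 (Fin n) → ℤˣ) (u : Sym2 (Fin n) →₀ ℕ) (a : k) :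
    signedVeroHom k ε (monomial u a) =
      monomialSign u ε • monomial (Finsupp.equivFunOnFinite.symm (VN n u)) a := by
  change veroHom n k (signTwist ε (monomial u a)) = _
  rw [signTwist_monomial, map_zsmul_unit, veroHom_monomial]

lemma coeff_signedVeroHom (ε : Sym2 (Fin n) → ℤˣ) (f : R n k) (b : Fin n →₀ ℕ) :
    coeff b (signedVeroHom k ε f) =
      ∑ u ∈ f.support with VN n u = b, coeff u f * ((monomialSign u ε : ℤ) : k) := by
  conv_lhs => rw [f.as_sum]
  rw [map_sum, coeff_sum, Finset.sum_filter]
  refine Finset.sum_congr rfl fun u _ => ?_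
  have hb : Finsupp.equivFunOnFinite.symm (VN n u) = b ↔ VN n u = b := Equiv.symm_apply_eq _
  rw [signedVeroHom_monomial, Units.smul_def, coeff_smul, coeff_monomial, zsmul_eq_mul, mul_comm]
  simp only [hb, ite_mul, zero_mul]

variable (k) in
/-- The character `monomialSign u` with values in `k`, restricted to the normalized signs. -/
def signCharacter (o : Fin n) (u : Sym2 (Fin n) →₀ ℕ) : normalizedSigns o →* k :=
  ((Int.castRingHom k : ℤ →* k).comp (Units.coeHom ℤ)).comp
    ((monomialSign u).comp (normalizedSigns o).subtype)

lemma signCharacter_apply (o : Fin n) (u : Sym2 (Fin n) →₀ ℕ) (ε : normalizedSigns o) :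
    signCharacter k o u ε = ((monomialSign u ε.1 : ℤ) : k) := rfl

/-- Dedekind's independence of characters, applied on a single Veronese fiber. -/
lemma linearIndepOn_signCharacter (hk : (2 : k) ≠ 0) (o : Fin n) (b : Fin n → ℕ) :
    LinearIndepOn k (fun u => (signCharacter k o u : normalizedSigns o → k))
      (offDiagSquarefree (Fin n) ∩ fiber n b) := by
  have hinj : Set.InjOn (signCharacter k o) (offDiagSquarefree (Fin n) ∩ fiber n b) := by
    rintro u ⟨hu, hub⟩ v ⟨hv, hvb⟩ huv
    refine eq_of_VN_eq_of_monomialSign_eq (o := o) hu hv (hub.trans hvb.symm) fun ε hε => ?_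
    have hsign := DFunLike.congr_fun huv ⟨ε, hε⟩
    rw [signCharacter_apply, signCharacter_apply] at hsign
    exact intCast_units_injective hk hsign
  exact (linearIndependent_monoidHom (normalizedSigns o) k).comp
    (fun u : ↥(offDiagSquarefree (Fin n) ∩ fiber n b) => signCharacter k o u) hinj.injective

lemma eq_zero_of_forall_signedVeroHom_eq_zero (hk : (2 : k) ≠ 0) (o : Fin n) {g : R n k}
    (hg : g ∈ restrictSupport k (offDiagSquarefree (Fin n)))
    (h : ∀ ε ∈ normalizedSigns o, signedVeroHom k ε g = 0) : g = 0 := by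
  ext u
  by_contra hu
  set T := g.support.filter fun v => VN n v = VN n u
  have hT : (T : Set _) ⊆ offDiagSquarefree (Fin n) ∩ fiber n (VN n u) := fun v hv =>
    ⟨hg (Finset.mem_filter.mp hv).1, (Finset.mem_filter.mp hv).2⟩
  have hindep := linearIndepOn_finset_iff.mp ((linearIndepOn_signCharacter hk o _).mono hT)
  refine hu (hindep (coeff · g) ?_ u (by simpa [T] using hu))
  funext ε
  have hcoeff := coeff_signedVeroHom ε.1 g (Finsupp.equivFunOnFinite.symm (VN n u))
  rw [h ε.1 ε.2, coeff_zero] at hcoeff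
  rw [Finset.sum_apply]
  exact hcoeff.symm

lemma Jideal_eq_iInf_map_signTwist (hk : (2 : k) ≠ 0) (o : Fin n) :
    Jideal n k = ⨅ ε : normalizedSigns o, Ideal.map (signTwist ε.1).toAlgHom (Iideal n k) := by
  have hJ : ∀ ε : normalizedSigns o,
      Jideal n k ≤ Ideal.map (signTwist ε.1).toAlgHom (Iideal n k) := fun ε =>
    Jideal_le_map_signTwist fun i => mem_normalizedSigns.mp ε.2 _ (.inl rfl)
  refine le_antisymm (le_iInf hJ) fun f hf => ?_
  obtain ⟨g, hg, r, hr, rfl⟩ := Submodule.mem_sup.mp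
    (restrictSupport_sup_Jideal_eq_top (n := n) (k := k) ▸ Submodule.mem_top (x := f))
  have hg0 : g = 0 := by
    refine eq_zero_of_forall_signedVeroHom_eq_zero hk o hg fun ε hε => ?_
    have hfε := Ideal.mem_iInf.mp hf ⟨ε, hε⟩
    rw [← RingHom.mem_ker, ← map_signTwist_Iideal]
    exact (Ideal.add_mem_iff_left _ (hJ ⟨ε, hε⟩ hr)).mp hfε
  rwa [hg0, zero_add]

end Separation

/-- If `char k ≠ 2`, there are `2^{c_{n-1}}` ℤ₂-twistings `φ_i` such
that the `φ_i(I_n)` are pairwise distinct prime ideals and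
`J_n = φ_1(I_n) ∩ ⋯ ∩ φ_N(I_n)` is a prime decomposition. -/
theorem principal_minor_ideal_prime_decomposition (n : ℕ) (hn : 2 ≤ n)
    (k : Type*) [Field k] (hk : (2 : k) ≠ 0) :
    ∃ φ : Fin (2 ^ c (n - 1)) → (R n k ≃ₐ[k] R n k),
      (∀ i, IsTwisting n k (φ i)) ∧
      (∀ i, (Ideal.map (φ i).toAlgHom (Iideal n k)).IsPrime) ∧
      (Function.Injective fun i => Ideal.map (φ i).toAlgHom (Iideal n k)) ∧
      Jideal n k = ⨅ i, Ideal.map (φ i).toAlgHom (Iideal n k) := by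
  let o : Fin n := lastIdx n (by omega)
  have hcard : Nat.card (normalizedSigns o) = 2 ^ c (n - 1) := by
    rw [card_normalizedSigns, Fintype.card_fin, c]
  let q : Fin (2 ^ c (n - 1)) ≃ normalizedSigns o := (Finite.equivFinOfCardEq hcard).symm
  refine ⟨fun i => signTwist (q i).1, fun i => isTwisting_signTwist _,
    fun i => isPrime_map_signTwist_Iideal _, (map_signTwist_injective hk o).comp q.injective, ?_⟩
  rw [Jideal_eq_iInf_map_signTwist hk o]
  exact q.iInf_comp.symm

end Veronese
end
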